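/- Let B : ℝ³ → ℝ³ be a smooth vector field such that (ΔB)₁ = (ΔB)₂ = 0 at every point of ∂Ω. Then (curl)³B · n = 0 on ∂Ω; that is, the third component of curl(curl(curl B)) vanishes at every point of ∂Ω. -/

import Mathlib

noncomputable section

open MeasureTheory

/-- Points/vectors in ℝ³, indexed by `Fin 3` (so index `0,1,2` stand for coordinates `1,2,3`). -/
abbrev V3 : Type := Fin 3 → ℝ

/-- Partial derivative in the `i`-th coordinate direction. -/
def pd (i : Fin 3) (f : V3 → ℝ) (x : V3) : ℝ := fderiv ℝ f x (Pi.single i 1)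

/-- Divergence of a vector field. -/
def vdiv (u : V3 → V3) (x : V3) : ℝ :=
  pd 0 (fun y => u y 0) x + pd 1 (fun y => u y 1) x + pd 2 (fun y => u y 2) x

/-- Curl of a vector field. -/
def vcurl (u : V3 → V3) (x : V3) : V3 :=
  ![pd 1 (fun y => u y 2) x - pd 2 (fun y => u y 1) x,
    pd 2 (fun y => u y 0) x - pd 0 (fun y => u y 2) x,
    pd 0 (fun y => u y 1) x - pd 1 (fun y => u y 0) x]

/-- Laplacian of a scalar function. -/
def lap (f : V3 → ℝ) (x : V3) : ℝ :=
  pd 0 (pd 0 f) x + pd 1 (pd 1 f) x + pd 2 (pd 2 f) x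

/-- Componentwise Laplacian of a vector field. -/
def vlap (u : V3 → V3) (x : V3) : V3 := fun i => lap (fun y => u y i) x

/-- Advective derivative `(u·∇)V`. -/
def adv (u V : V3 → V3) (x : V3) : V3 := fun i =>
  u x 0 * pd 0 (fun y => V y i) x + u x 1 * pd 1 (fun y => V y i) x +
    u x 2 * pd 2 (fun y => V y i) x

/-- Cross product in ℝ³. -/
def cross (a b : V3) : V3 :=
  ![a 1 * b 2 - a 2 * b 1, a 2 * b 0 - a 0 * b 2, a 0 * b 1 - a 1 * b 0]

/-- Dot product in ℝ³. -/
def dot (a b : V3) : ℝ := a 0 * b 0 + a 1 * b 1 + a 2 * b 2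

/-- Gradient of a scalar function. -/
def grad (f : V3 → ℝ) (x : V3) : V3 := fun i => pd i f x

/-- The boundary `∂Ω = {x : x₃ = 0 or x₃ = 1}`. -/
def onBdry (x : V3) : Prop := x 2 = 0 ∨ x 2 = 1

/-- Horizontal periodicity (period 1 in x₁ and x₂) of a scalar function. -/
def hperS (f : V3 → ℝ) : Prop :=
  (∀ x, f (x + Pi.single 0 1) = f x) ∧ (∀ x, f (x + Pi.single 1 1) = f x)

/-- Horizontal periodicity (period 1 in x₁ and x₂) of a vector field. -/
def hperV (u : V3 → V3) : Prop :=
  (∀ x, u (x + Pi.single 0 1) = u x) ∧ (∀ x, u (x + Pi.single 1 1) = u x)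

/-- The unit cube `Q = [0,1]³`. -/
def Q3 : Set V3 := Set.Icc 0 1

theorem sm_pd (i : Fin 3) {f : V3 → ℝ} (hf : ContDiff ℝ (⊤ : ℕ∞) f) :
    ContDiff ℝ (⊤ : ℕ∞) (pd i f) := by
  unfold pd
  exact (hf.fderiv_right (m := (⊤ : ℕ∞)) (by simp)).clm_apply contDiff_const

theorem sm_diff {f : V3 → ℝ} (hf : ContDiff ℝ (⊤ : ℕ∞) f) (x : V3) :
    DifferentiableAt ℝ f x :=
  (hf.differentiable (by simp)) x

theorem pd_sub' (i : Fin 3) {f g : V3 → ℝ} (hf : ContDiff ℝ (⊤ : ℕ∞) f)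
    (hg : ContDiff ℝ (⊤ : ℕ∞) g) :
    pd i (fun y => f y - g y) = fun y => pd i f y - pd i g y := by
  funext x
  unfold pd
  rw [fderiv_fun_sub (sm_diff hf x) (sm_diff hg x)]
  rfl

theorem pd_add' (i : Fin 3) {f g : V3 → ℝ} (hf : ContDiff ℝ (⊤ : ℕ∞) f)
    (hg : ContDiff ℝ (⊤ : ℕ∞) g) :
    pd i (fun y => f y + g y) = fun y => pd i f y + pd i g y := by
  funext x
  unfold pd
  rw [fderiv_fun_add (sm_diff hf x) (sm_diff hg x)]
  rfl

theorem pd_comm' (i j : Fin 3) {f : V3 → ℝ} (hf : ContDiff ℝ (⊤ : ℕ∞) f) :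
    pd i (pd j f) = pd j (pd i f) := by
  funext x
  have hs : IsSymmSndFDerivAt ℝ f x :=
    hf.contDiffAt.isSymmSndFDerivAt (by simp only [minSmoothness_of_isRCLikeNormedField]; exact WithTop.coe_le_coe.2 (le_top : (2 : ℕ∞) ≤ ⊤))
  have hd : DifferentiableAt ℝ (fderiv ℝ f) x :=
    ((hf.fderiv_right (m := (⊤ : ℕ∞)) (by simp)).differentiable (by simp)) x
  have key : ∀ v w : V3, fderiv ℝ (fun y => fderiv ℝ f y v) x w
      = fderiv ℝ (fderiv ℝ f) x w v := by
    intro v w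
    rw [fderiv_clm_apply hd (differentiableAt_const v)]
    simp
  change fderiv ℝ (fun y => fderiv ℝ f y _) x _ = fderiv ℝ (fun y => fderiv ℝ f y _) x _
  rw [key, key]
  exact hs _ _

/-- Tangential derivative of a function vanishing on the boundary. -/
theorem pd_tan (i : Fin 3) (hi : i ≠ 2) {f : V3 → ℝ} (hf : ContDiff ℝ (⊤ : ℕ∞) f)
    (h0 : ∀ x, onBdry x → f x = 0) (x : V3) (hx : onBdry x) : pd i f x = 0 := by
  unfold pd
  rw [← (sm_diff hf x).lineDeriv_eq_fderiv]
  unfold lineDeriv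
  have : (fun t : ℝ => f (x + t • (Pi.single i 1 : V3))) = fun _ => 0 := by
    funext t
    apply h0
    unfold onBdry at *
    simpa [Pi.single_apply, hi.symm] using hx
  rw [this]
  simp

/-- If `(ΔB)₁ = (ΔB)₂ = 0` on `∂Ω`, then `(curl)³B · n = 0` on `∂Ω`, i.e. the third
component of `curl(curl(curl B))` vanishes on `∂Ω`. -/
theorem stmt_6 (B : V3 → V3)
    (hB : ContDiff ℝ (⊤ : ℕ∞) B)
    (hlapB : ∀ x, onBdry x → vlap B x 0 = 0 ∧ vlap B x 1 = 0) :
    ∀ x, onBdry x → vcurl (vcurl (vcurl B)) x 2 = 0 := by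
  intro x hx
  have ha : ContDiff ℝ (⊤ : ℕ∞) (fun y => B y 0) := contDiff_pi.1 hB 0
  have hb : ContDiff ℝ (⊤ : ℕ∞) (fun y => B y 1) := contDiff_pi.1 hB 1
  have hc : ContDiff ℝ (⊤ : ℕ∞) (fun y => B y 2) := contDiff_pi.1 hB 2
  have hl : ∀ {f : V3 → ℝ}, ContDiff ℝ (⊤ : ℕ∞) f → ContDiff ℝ (⊤ : ℕ∞) (lap f) := by
    intro f hf
    exact ((sm_pd 0 (sm_pd 0 hf)).add (sm_pd 1 (sm_pd 1 hf))).add (sm_pd 2 (sm_pd 2 hf))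
  have t0 := pd_tan 1 (by decide) (hl ha) (fun y hy => (hlapB y hy).1) x hx
  have t1 := pd_tan 0 (by decide) (hl hb) (fun y hy => (hlapB y hy).2) x hx
  simp only [vcurl, Matrix.cons_val_zero, Matrix.cons_val_one, Matrix.cons_val]
  generalize (fun y => B y 0) = a at *
  generalize (fun y => B y 1) = b at *
  generalize (fun y => B y 2) = c at *
  let D : V3 → ℝ := fun y => pd 0 a y + pd 1 b y + pd 2 c y
  have hD : ContDiff ℝ (⊤ : ℕ∞) D := ((sm_pd 0 ha).add (sm_pd 1 hb)).add (sm_pd 2 hc)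
  have eD : ∀ i, pd i D = fun y => pd i (pd 0 a) y + pd i (pd 1 b) y + pd i (pd 2 c) y := by
    intro i
    change pd i (fun y => (fun z => pd 0 a z + pd 1 b z) y + pd 2 c y) = _
    rw [pd_add' i ((sm_pd 0 ha).add (sm_pd 1 hb)) (sm_pd 2 hc),
      pd_add' i (sm_pd 0 ha) (sm_pd 1 hb)]
  have e1 : (fun y => pd 2 (fun y => pd 1 c y - pd 2 b y) y - pd 0 (fun y => pd 0 b y - pd 1 a y) y)
      = fun y => pd 1 D y - lap b y := by
    rw [eD, pd_sub' 2 (sm_pd 1 hc) (sm_pd 2 hb), pd_sub' 0 (sm_pd 0 hb) (sm_pd 1 ha),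
      pd_comm' 1 0 ha, pd_comm' 1 2 hc]
    funext y
    simp only [lap]
    ring
  have e0 : (fun y => pd 1 (fun y => pd 0 b y - pd 1 a y) y - pd 2 (fun y => pd 2 a y - pd 0 c y) y)
      = fun y => pd 0 D y - lap a y := by
    rw [eD, pd_sub' 2 (sm_pd 2 ha) (sm_pd 0 hc), pd_sub' 1 (sm_pd 0 hb) (sm_pd 1 ha),
      pd_comm' 0 1 hb, pd_comm' 0 2 hc]
    funext y
    simp only [lap]
    ring
  rw [e0, e1, pd_sub' 0 (sm_pd 1 hD) (hl hb), pd_sub' 1 (sm_pd 0 hD) (hl ha),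
    pd_comm' 0 1 hD]
  simp only [t0, t1]
  ring
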